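/- Let q be a prime, r ≥ 0 an integer, and n = q^{2r+1}. Then for 0 ≤ i ≤ 2r+1, Y[n, q^i] = n if i = r+1, and Y[n, q^i] = 0 otherwise. -/

import Mathlib

/-- The Ramanujan sum `c_d(r)`: the sum of the `r`-th powers of all primitive
`d`-th roots of unity. -/
noncomputable def ramanujanSum (d r : ℕ) : ℂ :=
  ∑ m ∈ (Finset.range d).filter (fun m => Nat.gcd m d = 1),
    Complex.exp (2 * Real.pi * Complex.I * ((m : ℂ) * (r : ℂ) / (d : ℂ)))

/-- `Y[n,k] = ∑_{d ∣ n} c_k(n/d) · c_d(n/d)`. -/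
noncomputable def Y (n k : ℕ) : ℂ :=
  ∑ d ∈ n.divisors, ramanujanSum k (n / d) * ramanujanSum d (n / d)

/-!
For divisors `k` and `e` of `n`, the Ramanujan sums satisfy the orthogonality relation
`∑ d ∣ n, c_k(n/d) c_d(n/e) = n` if `k = e`, and `= 0` otherwise. By Möbius
inversion in `k` it suffices to compare the sums of both sides over the divisors of each `l ∣ n`,
and these are evaluated by applying `∑ d ∣ m, c_d(a) = m · [m ∣ a]` twice.

For `n = q^(2r+1)`, the values `c_{q^j}(q^(2r+1-j))` and `c_{q^j}(q^r)` agree for all `j`: the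
arguments `q^(2r+1-j)` and `q^r` are divisible by the same powers among `q^(j-1)` and `q^j`. Hence
`Y[n, k]` is the orthogonality sum with `e = n / q^r = q^(r+1)`.
-/

open Finset

theorem sum_nthRootsFinset_pow {R : Type*} [CommRing R] [IsDomain R] {ζ : R} {n : ℕ}
    (hζ : IsPrimitiveRoot ζ n) (a : ℕ) :
    ∑ ξ ∈ Polynomial.nthRootsFinset n (1 : R), ξ ^ a = if n ∣ a then (n : R) else 0 := by
  split_ifs with hna
  · have pow_eq_one : ∀ ξ ∈ Polynomial.nthRootsFinset n (1 : R), ξ ^ a = 1 := by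
      intro ξ hξ
      obtain ⟨b, rfl⟩ := hna
      rcases n.eq_zero_or_pos with rfl | hn
      · simp
      · rw [pow_mul, (Polynomial.mem_nthRootsFinset hn 1).1 hξ, one_pow]
    rw [sum_congr rfl pow_eq_one, sum_const, hζ.card_nthRootsFinset, nsmul_one]
  · have sum_eq_geom : ∑ ξ ∈ Polynomial.nthRootsFinset n (1 : R), ξ ^ a =
        ∑ i ∈ range n, (ζ ^ a) ^ i := by
      classical
      rw [Polynomial.nthRootsFinset_def, ← Multiset.toFinset_eq hζ.nthRoots_one_nodup]
      simp [Finset.sum, hζ.nthRoots_eq (one_pow n), pow_right_comm]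
    have geom_mul : (∑ i ∈ range n, (ζ ^ a) ^ i) * (ζ ^ a - 1) = 0 := by
      rw [geom_sum_mul, pow_right_comm, hζ.pow_eq_one, one_pow, sub_self]
    rw [sum_eq_geom]
    exact (mul_eq_zero.1 geom_mul).resolve_right
      (sub_ne_zero.2 fun h => hna (hζ.dvd_of_pow_eq_one a h))

theorem ramanujanSum_eq_sum_primitiveRoots (d a : ℕ) :
    ramanujanSum d a = ∑ ξ ∈ primitiveRoots d ℂ, ξ ^ a := by
  rcases eq_or_ne d 0 with rfl | hd
  · simp [ramanujanSum]
  have hζ := Complex.isPrimitiveRoot_exp d hd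
  have exp_eq_pow (m : ℕ) : Complex.exp (2 * Real.pi * Complex.I * ((m : ℂ) * a / d)) =
      (Complex.exp (2 * Real.pi * Complex.I / d) ^ m) ^ a := by
    rw [← pow_mul, ← Complex.exp_nat_mul]
    push_cast
    ring_nf
  simp only [ramanujanSum, exp_eq_pow]
  refine sum_nbij (Complex.exp (2 * Real.pi * Complex.I / d) ^ ·) ?_ ?_ ?_ fun _ _ => rfl
  · intro m hm
    exact (mem_primitiveRoots (Nat.pos_of_ne_zero hd)).2
      (hζ.pow_of_coprime m (mem_filter.1 hm).2)
  · intro i hi j hj h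
    exact hζ.pow_inj (mem_range.1 (mem_filter.1 hi).1) (mem_range.1 (mem_filter.1 hj).1) h
  · intro ξ hξ
    have : NeZero d := ⟨hd⟩
    obtain ⟨i, hi, hcop, rfl⟩ :=
      hζ.isPrimitiveRoot_iff.1 ((mem_primitiveRoots (Nat.pos_of_ne_zero hd)).1 hξ)
    exact ⟨i, mem_filter.2 ⟨mem_range.2 hi, hcop⟩, rfl⟩

theorem sum_divisors_ramanujanSum (n a : ℕ) :
    ∑ d ∈ n.divisors, ramanujanSum d a = if n ∣ a then (n : ℂ) else 0 := by
  rcases eq_or_ne n 0 with rfl | hn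
  · simp
  rw [← sum_nthRootsFinset_pow (Complex.isPrimitiveRoot_exp n hn) a,
    IsPrimitiveRoot.nthRoots_one_eq_biUnion_primitiveRoots,
    sum_biUnion fun _ _ _ _ hne => IsPrimitiveRoot.disjoint hne]
  simp only [ramanujanSum_eq_sum_primitiveRoots]

theorem eq_of_sum_divisors_eq {M : Type*} [AddCommGroup M] {f g : ℕ → M} {n : ℕ} (hn : n ≠ 0)
    (h : ∀ k, k ∣ n → ∑ d ∈ k.divisors, f d = ∑ d ∈ k.divisors, g d) : f n = g n := by
  have moebius_inversion {u v : ℕ → M} (huv : ∀ k, k ∣ n → ∑ d ∈ k.divisors, u d = v k) :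
      ∑ x ∈ n.divisorsAntidiagonal, ArithmeticFunction.moebius x.1 • v x.2 = u n :=
    (ArithmeticFunction.sum_eq_iff_sum_smul_moebius_eq_on {k | k ∣ n} fun _ _ => dvd_trans).1
      (fun k _ hk => huv k hk) n hn.bot_lt dvd_rfl
  rw [← moebius_inversion h, moebius_inversion fun _ _ => rfl]

theorem divisors_filter_dvd_div {n k : ℕ} (hk : k ∣ n) :
    {d ∈ n.divisors | k ∣ n / d} = (n / k).divisors := by
  ext d
  simp only [mem_filter, Nat.mem_divisors, Nat.dvd_div_iff_mul_dvd hk]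
  constructor
  · rintro ⟨⟨hd, hn⟩, hkd⟩
    rw [Nat.dvd_div_iff_mul_dvd hd, mul_comm] at hkd
    exact ⟨hkd, (Nat.div_ne_zero_iff_of_dvd hk).2 ⟨hn, ne_zero_of_dvd_ne_zero hn hk⟩⟩
  · rintro ⟨hkd, hne⟩
    have hd : d ∣ n := (dvd_mul_left d k).trans hkd
    rw [Nat.dvd_div_iff_mul_dvd hd, mul_comm]
    exact ⟨⟨hd, ((Nat.div_ne_zero_iff_of_dvd hk).1 hne).1⟩, hkd⟩

theorem sum_ramanujanSum_mul_ramanujanSum {n k e : ℕ} (hk : k ∣ n) (he : e ∣ n) :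
    ∑ d ∈ n.divisors, ramanujanSum k (n / d) * ramanujanSum d (n / e) =
      if k = e then (n : ℂ) else 0 := by
  rcases eq_or_ne n 0 with rfl | hn
  · simp
  refine eq_of_sum_divisors_eq
    (f := fun j => ∑ d ∈ n.divisors, ramanujanSum j (n / d) * ramanujanSum d (n / e))
    (g := fun j => if j = e then (n : ℂ) else 0) (ne_zero_of_dvd_ne_zero hn hk) fun l hlk => ?_
  have hln : l ∣ n := hlk.trans hk
  have hl : l ≠ 0 := ne_zero_of_dvd_ne_zero hn hln
  have div_dvd_div_iff : n / l ∣ n / e ↔ e ∣ l := by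
    rw [Nat.div_dvd_iff_dvd_mul hln hl.bot_lt]
    nth_rw 1 [← Nat.mul_div_cancel' he]
    exact Nat.mul_dvd_mul_iff_right (Nat.pos_of_dvd_of_pos (Nat.div_dvd_of_dvd he) hn.bot_lt)
  calc ∑ j ∈ l.divisors, ∑ d ∈ n.divisors, ramanujanSum j (n / d) * ramanujanSum d (n / e)
      = ∑ d ∈ n.divisors, (if l ∣ n / d then (l : ℂ) else 0) * ramanujanSum d (n / e) := by
        rw [sum_comm]
        simp only [← sum_mul, sum_divisors_ramanujanSum]
    _ = l * ∑ d ∈ (n / l).divisors, ramanujanSum d (n / e) := by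
        simp only [ite_mul, zero_mul]
        rw [← sum_filter, divisors_filter_dvd_div hln, mul_sum]
    _ = if e ∣ l then (n : ℂ) else 0 := by
        rw [sum_divisors_ramanujanSum, mul_ite, mul_zero, ← Nat.cast_mul, Nat.mul_div_cancel' hln]
        simp only [div_dvd_div_iff]
    _ = ∑ j ∈ l.divisors, if j = e then (n : ℂ) else 0 := by
        rw [sum_ite_eq' l.divisors e]
        simp only [Nat.mem_divisors, ne_eq, hl, not_false_eq_true, and_true]

theorem ramanujanSum_one_left (a : ℕ) : ramanujanSum 1 a = 1 := by
  simp [ramanujanSum]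

theorem ramanujanSum_prime_pow_succ {q : ℕ} (hq : q.Prime) (j a : ℕ) :
    ramanujanSum (q ^ (j + 1)) a =
      (if q ^ (j + 1) ∣ a then ((q ^ (j + 1) : ℕ) : ℂ) else 0) -
        if q ^ j ∣ a then ((q ^ j : ℕ) : ℂ) else 0 := by
  rw [← sum_divisors_ramanujanSum, ← sum_divisors_ramanujanSum, Nat.sum_divisors_prime_pow hq,
    Nat.sum_divisors_prime_pow hq, sum_range_succ _ (j + 1), add_sub_cancel_left]

theorem ramanujanSum_prime_pow_div_self {q : ℕ} (hq : q.Prime) {r j : ℕ} (hj : j ≤ 2 * r + 1) :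
    ramanujanSum (q ^ j) (q ^ (2 * r + 1) / q ^ j) = ramanujanSum (q ^ j) (q ^ r) := by
  rw [Nat.pow_div hj hq.pos]
  cases j with
  | zero => simp only [pow_zero, ramanujanSum_one_left]
  | succ j =>
    have succ_le_iff : j + 1 ≤ 2 * r + 1 - (j + 1) ↔ j + 1 ≤ r := by lia
    have le_iff : j ≤ 2 * r + 1 - (j + 1) ↔ j ≤ r := by lia
    simp only [ramanujanSum_prime_pow_succ hq, Nat.pow_dvd_pow_iff_le_right hq.one_lt,
      succ_le_iff, le_iff]

theorem stmt_15 (q : ℕ) (hq : q.Prime) (r i : ℕ) (hi : i ≤ 2 * r + 1) :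
    Y (q ^ (2 * r + 1)) (q ^ i) =
      if i = r + 1 then ((q ^ (2 * r + 1) : ℕ) : ℂ) else 0 := by
  have pow_r_eq : q ^ r = q ^ (2 * r + 1) / q ^ (r + 1) := by
    rw [Nat.pow_div (by lia) hq.pos]
    congr 1
    lia
  have diagonal_eq : ∀ d ∈ (q ^ (2 * r + 1)).divisors,
      ramanujanSum d (q ^ (2 * r + 1) / d) =
        ramanujanSum d (q ^ (2 * r + 1) / q ^ (r + 1)) := by
    intro d hd
    obtain ⟨j, hj, rfl⟩ := (Nat.mem_divisors_prime_pow hq _).1 hd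
    rw [ramanujanSum_prime_pow_div_self hq hj, pow_r_eq]
  calc Y (q ^ (2 * r + 1)) (q ^ i)
      = ∑ d ∈ (q ^ (2 * r + 1)).divisors, ramanujanSum (q ^ i) (q ^ (2 * r + 1) / d) *
          ramanujanSum d (q ^ (2 * r + 1) / q ^ (r + 1)) :=
        sum_congr rfl fun d hd => by rw [diagonal_eq d hd]
    _ = if q ^ i = q ^ (r + 1) then ((q ^ (2 * r + 1) : ℕ) : ℂ) else 0 :=
        sum_ramanujanSum_mul_ramanujanSum (pow_dvd_pow q hi) (pow_dvd_pow q (by lia))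
    _ = if i = r + 1 then ((q ^ (2 * r + 1) : ℕ) : ℂ) else 0 := by
        simp only [Nat.pow_right_inj hq.one_lt]
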